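/- Let A ∈ SL(2,ℤ) have entries a, b (top row) and c, d (bottom row), and suppose A = ε·M(q_1,…,q_k,m,0) for some ε ∈ {1,−1} and integers q_1,…,q_k, m with q_i ≥ 2 for all i ∈ {2,…,k}. Then c ≠ 0, a/c = [[q_1,…,q_k]], and m = ⌈d/c⌉; in particular, such a presentation of A ending in 0 with all entries except the first and the last two at least 2 is unique. -/

import Mathlib

/-- The continuant matrix `M(c)` for an integer `c`. -/
def M (c : ℤ) : Matrix (Fin 2) (Fin 2) ℤ := !![c, -1; 1, 0]

/-- `M(c₁,…,cₙ) := M(c₁)·…·M(cₙ)`. -/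
def Mseq (l : List ℤ) : Matrix (Fin 2) (Fin 2) ℤ := (l.map M).prod

/-- The negative continued fraction `[[q₁,…,q_k]]` of a list of integers,
defined by `[[q_k]] = q_k` and `[[q_i,…,q_k]] = q_i − 1/[[q_{i+1},…,q_k]]`. -/
def ncf : List ℤ → ℚ
  | [] => 0
  | [q] => (q : ℚ)
  | q :: l => (q : ℚ) - 1 / ncf l

/-!
Write `A = ε • M(q₁,…,q_k,m,0)` with rows `(a, b)` and `(c, d)`. Multiplying out gives
`a/c = [[q₁,…,q_k]]`, and, because each factor is equal to the conjugate of its transpose by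
`diag(1, −1)`, also `d/c = [[m,q_k,…,q₂]]`. In both fractions every entry after the first is at
least `2`, so the part subtracted from the first entry lies in `[0, 1)` and the first entry is the
ceiling of the fraction. This reads off `m` from `d/c`, and `q₁, q₂, …` one after the other from
`a/c`.
-/

section NegativeContinuedFraction

variable {x x' : ℤ} {l l' : List ℤ}

-- The junk values `ncf [] = 0` and `1 / 0 = 0` make the recursion valid for `l = []` as well.
theorem ncf_cons (x : ℤ) (l : List ℤ) : ncf (x :: l) = x - 1 / ncf l := by
  cases l with
  | nil => simp [ncf]
  | cons => rfl

theorem one_lt_ncf (hl : ∀ y ∈ l, 2 ≤ y) (hne : l ≠ []) : 1 < ncf l := by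
  induction l with
  | nil => contradiction
  | cons x l ih =>
    obtain ⟨hx, hl⟩ := List.forall_mem_cons.1 hl
    have hx : (2 : ℚ) ≤ x := by exact_mod_cast hx
    rw [ncf_cons]
    rcases eq_or_ne l [] with rfl | hne
    · simpa [ncf] using one_lt_two.trans_le hx
    · have hlt : 1 / ncf l < 1 := (div_lt_one (one_pos.trans (ih hl hne))).2 (ih hl hne)
      linarith

theorem one_div_ncf_mem_Ico (hl : ∀ y ∈ l, 2 ≤ y) : 1 / ncf l ∈ Set.Ico 0 1 := by
  rcases eq_or_ne l [] with rfl | hne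
  · simp [ncf]
  · have h := one_lt_ncf hl hne
    have hpos := one_pos.trans h
    exact ⟨(one_div_pos.2 hpos).le, (div_lt_one hpos).2 h⟩

theorem ceil_ncf_cons (x : ℤ) (hl : ∀ y ∈ l, 2 ≤ y) : ⌈ncf (x :: l)⌉ = x := by
  obtain ⟨h0, h1⟩ := one_div_ncf_mem_Ico hl
  rw [ncf_cons, Int.ceil_eq_iff]
  exact ⟨by linarith, by linarith⟩

theorem ncf_cons_inj (hl : ∀ y ∈ l, 2 ≤ y) (hl' : ∀ y ∈ l', 2 ≤ y) :
    ncf (x :: l) = ncf (x' :: l') ↔ x = x' ∧ ncf l = ncf l' := by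
  refine ⟨fun h => ?_, fun ⟨hx, h⟩ => by rw [ncf_cons, ncf_cons, hx, h]⟩
  obtain rfl : x = x' := by rw [← ceil_ncf_cons x hl, h, ceil_ncf_cons x' hl']
  simpa [ncf_cons] using h

theorem ncf_injOn : Set.InjOn ncf {l | ∀ y ∈ l, 2 ≤ y} := by
  intro l hl l' hl' h
  induction l generalizing l' with
  | nil =>
    by_contra hne
    exact (zero_lt_one.trans (one_lt_ncf hl' (Ne.symm hne))).ne h
  | cons x l ih =>
    cases l' with
    | nil => exact absurd h (zero_lt_one.trans (one_lt_ncf hl (List.cons_ne_nil x l))).ne'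
    | cons x' l' =>
      have ht := (List.forall_mem_cons.1 hl).2
      have ht' := (List.forall_mem_cons.1 hl').2
      obtain ⟨hx, htail⟩ := (ncf_cons_inj ht ht').1 h
      rw [hx, ih ht ht' htail]

end NegativeContinuedFraction

section ContinuantMatrix

variable {l : List ℤ}

theorem Mseq_append (l l' : List ℤ) : Mseq (l ++ l') = Mseq l * Mseq l' := by
  simp [Mseq]

theorem Mseq_cons (x : ℤ) (l : List ℤ) :
    Mseq (x :: l) =
      !![x * Mseq l 0 0 - Mseq l 1 0, x * Mseq l 0 1 - Mseq l 1 1; Mseq l 0 0, Mseq l 0 1] := by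
  change M x * Mseq l = _
  ext i j
  fin_cases i <;> fin_cases j <;> simp [M, Matrix.mul_apply, sub_eq_add_neg]

theorem Mseq_concat (l : List ℤ) (x : ℤ) :
    Mseq (l ++ [x]) =
      !![x * Mseq l 0 0 + Mseq l 0 1, -Mseq l 0 0; x * Mseq l 1 0 + Mseq l 1 1, -Mseq l 1 0] := by
  rw [Mseq_append]
  ext i j
  fin_cases i <;> fin_cases j <;> simp [Mseq, M, Matrix.mul_apply, mul_comm]

theorem Mseq_reverse (l : List ℤ) :
    Mseq l.reverse = !![Mseq l 0 0, -Mseq l 1 0; -Mseq l 0 1, Mseq l 1 1] := by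
  induction l with
  | nil => simp [Mseq, Matrix.one_fin_two]
  | cons x l ih =>
    rw [List.reverse_cons, Mseq_concat, ih, Mseq_cons]
    simp [sub_eq_add_neg, add_comm]

theorem Mseq_first_col_bounds (hl : ∀ y ∈ l, 2 ≤ y) :
    0 ≤ Mseq l 1 0 ∧ Mseq l 1 0 < Mseq l 0 0 := by
  induction l with
  | nil => simp [Mseq]
  | cons x l ih =>
    obtain ⟨hx, hl⟩ := List.forall_mem_cons.1 hl
    obtain ⟨h0, h1⟩ := ih hl
    simp only [Mseq_cons, Matrix.of_apply, Matrix.cons_val]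
    exact ⟨by lia, by nlinarith⟩

theorem Mseq_cons_one_zero_pos (x : ℤ) (hl : ∀ y ∈ l, 2 ≤ y) : 0 < Mseq (x :: l) 1 0 := by
  obtain ⟨h0, h1⟩ := Mseq_first_col_bounds hl
  simpa [Mseq_cons] using h0.trans_lt h1

theorem ncf_cons_eq_div (x : ℤ) (hl : ∀ y ∈ l, 2 ≤ y) :
    ncf (x :: l) = (Mseq (x :: l) 0 0 : ℚ) / Mseq (x :: l) 1 0 := by
  induction l generalizing x with
  | nil => simp [ncf, Mseq, M]
  | cons y l ih =>
    have hne : Mseq (y :: l) 0 0 ≠ 0 := by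
      simpa [Mseq_cons x] using (Mseq_cons_one_zero_pos x hl).ne'
    rw [ncf_cons, ih y (List.forall_mem_cons.1 hl).2, Mseq_cons x]
    simp [sub_div, hne]

theorem Mseq_append_pair_apply_zero (l : List ℤ) (m : ℤ) (i : Fin 2) :
    Mseq (l ++ [m, 0]) i 0 = -Mseq l i 0 := by
  rw [List.append_cons, Mseq_concat, Mseq_concat]
  fin_cases i <;> simp

theorem Mseq_cons_append_pair_one_one (x : ℤ) (l : List ℤ) (m : ℤ) :
    Mseq (x :: l ++ [m, 0]) 1 1 = -Mseq (m :: l.reverse) 0 0 := by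
  rw [List.append_cons, Mseq_concat, List.cons_append, Mseq_cons, Mseq_concat]
  simp [Mseq_cons, Mseq_reverse]

end ContinuantMatrix

section Presentation

variable {A : Matrix (Fin 2) (Fin 2) ℤ} {x m ε : ℤ} {l : List ℤ}

theorem one_zero_ne_zero_of_eq_smul_Mseq (hl : ∀ y ∈ l, 2 ≤ y) (hε : ε ≠ 0)
    (hA : A = ε • Mseq (x :: l ++ [m, 0])) : A 1 0 ≠ 0 := by
  rw [hA, Matrix.smul_apply, Mseq_append_pair_apply_zero]
  exact smul_ne_zero hε (neg_ne_zero.2 (Mseq_cons_one_zero_pos x hl).ne')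

theorem ncf_eq_div_of_eq_smul_Mseq (hl : ∀ y ∈ l, 2 ≤ y) (hε : ε ≠ 0)
    (hA : A = ε • Mseq (x :: l ++ [m, 0])) : ncf (x :: l) = (A 0 0 : ℚ) / A 1 0 := by
  have hε : (ε : ℚ) ≠ 0 := Int.cast_ne_zero.2 hε
  simp only [hA, Matrix.smul_apply, Mseq_append_pair_apply_zero, smul_eq_mul]
  push_cast
  rw [mul_div_mul_left _ _ hε, neg_div_neg_eq, ncf_cons_eq_div x hl]

theorem ncf_reverse_eq_div_of_eq_smul_Mseq (hl : ∀ y ∈ l, 2 ≤ y) (hε : ε ≠ 0)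
    (hA : A = ε • Mseq (x :: l ++ [m, 0])) : ncf (m :: l.reverse) = (A 1 1 : ℚ) / A 1 0 := by
  have hε : (ε : ℚ) ≠ 0 := Int.cast_ne_zero.2 hε
  have hrev : ∀ y ∈ l.reverse, 2 ≤ y := fun y hy => hl y (List.mem_reverse.1 hy)
  have hden : Mseq (m :: l.reverse) 1 0 = Mseq (x :: l) 1 0 := by
    simp [Mseq_cons, Mseq_reverse]
  simp only [hA, Matrix.smul_apply, Mseq_append_pair_apply_zero, Mseq_cons_append_pair_one_one,
    smul_eq_mul]
  push_cast
  rw [mul_div_mul_left _ _ hε, neg_div_neg_eq, ncf_cons_eq_div m hrev, hden]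

theorem eq_ceil_of_eq_smul_Mseq (hl : ∀ y ∈ l, 2 ≤ y) (hε : ε ≠ 0)
    (hA : A = ε • Mseq (x :: l ++ [m, 0])) : m = ⌈(A 1 1 : ℚ) / A 1 0⌉ := by
  rw [← ncf_reverse_eq_div_of_eq_smul_Mseq hl hε hA, ceil_ncf_cons]
  exact fun y hy => hl y (List.mem_reverse.1 hy)

end Presentation

theorem two_le_of_mem_tail {q : List ℤ} (hq : ∀ i, 1 ≤ i → i < q.length → 2 ≤ q.getD i 0) :
    ∀ y ∈ q.tail, 2 ≤ y := by
  intro y hy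
  obtain ⟨i, hi, rfl⟩ := List.mem_iff_getElem.1 hy
  have hi : i + 1 < q.length := by rw [List.length_tail] at hi; lia
  simpa [hi] using hq (i + 1) (by lia) hi

theorem presentation_unique_general (A : Matrix (Fin 2) (Fin 2) ℤ)
    (q : List ℤ) (hq : q ≠ []) (hq2 : ∀ y ∈ q.tail, 2 ≤ y) (m ε : ℤ) (hε : ε ≠ 0)
    (hA : A = ε • Mseq (q ++ [m, 0])) :
    A 1 0 ≠ 0 ∧ ncf q = (A 0 0 : ℚ) / A 1 0 ∧ m = ⌈(A 1 1 : ℚ) / A 1 0⌉ ∧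
      ∀ (q' : List ℤ) (m' ε' : ℤ), q' ≠ [] → (∀ y ∈ q'.tail, 2 ≤ y) → ε' ≠ 0 →
        A = ε' • Mseq (q' ++ [m', 0]) → q' = q ∧ m' = m := by
  obtain ⟨x, l, rfl⟩ := List.exists_cons_of_ne_nil hq
  have hfrac := ncf_eq_div_of_eq_smul_Mseq hq2 hε hA
  have hceil := eq_ceil_of_eq_smul_Mseq hq2 hε hA
  refine ⟨one_zero_ne_zero_of_eq_smul_Mseq hq2 hε hA, hfrac, hceil, ?_⟩
  intro q' m' ε' hq' hq2' hε' hA'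
  obtain ⟨x', l', rfl⟩ := List.exists_cons_of_ne_nil hq'
  have hncf : ncf (x' :: l') = ncf (x :: l) :=
    (ncf_eq_div_of_eq_smul_Mseq hq2' hε' hA').trans hfrac.symm
  obtain ⟨rfl, htail⟩ := (ncf_cons_inj hq2' hq2).1 hncf
  exact ⟨congrArg _ (ncf_injOn hq2' hq2 htail),
    (eq_ceil_of_eq_smul_Mseq hq2' hε' hA').trans hceil.symm⟩

/-- Let `A = !![a, b; c, d] ∈ SL(2,ℤ)` and suppose `A = ε·M(q₁,…,q_k,m,0)` for some
`ε ∈ {1,−1}` and integers `q₁,…,q_k, m` with `qᵢ ≥ 2` for all `i ∈ {2,…,k}`.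
Then `c ≠ 0`, `a/c = [[q₁,…,q_k]]` and `m = ⌈d/c⌉`; in particular such a
presentation of `A` is unique. -/
theorem presentation_unique (a b c d : ℤ) (hdet : a * d - b * c = 1)
    (q : List ℤ) (hq : q ≠ [])
    (hq2 : ∀ i, 1 ≤ i → i < q.length → 2 ≤ q.getD i 0)
    (m ε : ℤ) (hε : ε = 1 ∨ ε = -1)
    (hA : !![a, b; c, d] = ε • Mseq (q ++ [m, 0])) :
    c ≠ 0 ∧ ncf q = (a : ℚ) / (c : ℚ) ∧ m = ⌈(d : ℚ) / (c : ℚ)⌉ ∧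
      ∀ (q' : List ℤ) (m' ε' : ℤ), q' ≠ [] →
        (∀ i, 1 ≤ i → i < q'.length → 2 ≤ q'.getD i 0) →
        (ε' = 1 ∨ ε' = -1) →
        !![a, b; c, d] = ε' • Mseq (q' ++ [m', 0]) → q' = q ∧ m' = m := by
  obtain ⟨hc, hfrac, hceil, huniq⟩ := presentation_unique_general !![a, b; c, d] q hq
    (two_le_of_mem_tail hq2) m ε (Int.isUnit_iff.2 hε).ne_zero hA
  exact ⟨hc, hfrac, hceil, fun q' m' ε' hq' hq2' hε' =>
    huniq q' m' ε' hq' (two_le_of_mem_tail hq2') (Int.isUnit_iff.2 hε').ne_zero⟩
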